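/- For 0 < α < 1 let A_α := {x ∈ ℝ³ : 1/(1+α) ≤ |x| ≤ 1/(1−α)}. There exists a universal constant C such that for every 0 < α ≤ 1/2 and every x ∈ ℝ³, ∫_{A_α} |x−y|^{−2} dy ≤ C·α·log(α^{−1}); in other words, the convolution 𝟙_{A_α} ∗ |·|^{−2} is bounded on ℝ³ by C·α·log(α^{−1}). -/

import Mathlib

/-!
The potential is computed from the layer-cake formula
`∫_A |x-y|⁻² dy = ∫₀^∞ |A ∩ {y : t < |x-y|⁻²}| dt`, where the set on the right lies in
`A ∩ B(x, t^{-1/2})`. Two bounds on `|A ∩ B(x, r)|` are used: the trivial `|B(x, r)| = V r³`, where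
`V` is the volume of the unit ball, and `|A ∩ B(x, r)| ≤ 216 V α r²` for `0 < r ≤ 3`
(`volume_annulus_inter_ball_le`). For `t ≤ 1` the volume of `A` itself is `O(α)`; for
`1 < t ≤ α⁻²` the second bound gives `O(α / t)`, whose integral is `O(α log α⁻¹)`; for `t > α⁻²` the
trivial bound gives `O(t^{-3/2})`, whose integral is `O(α)`. Since `log α⁻¹ ≥ log 2`, everything is
`O(α log α⁻¹)`.

The bound `O(α r²)` is a packing argument: the dilates of `A ∩ B(x, r)` by the factors `1 + 9 α k`,
`0 ≤ k ≤ r / (27 α)`, are pairwise disjoint because `A` has relative thickness about `2 α`, they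
have at least the volume of the original set, and they all lie in `B(x, 2 r)`. There are at least
`r / (27 α)` of them and `|B(x, 2 r)| = 8 V r³`.
-/

open MeasureTheory

noncomputable section

/-- Three dimensional Euclidean space. -/
abbrev R3 : Type := EuclideanSpace ℝ (Fin 3)

/-- The closed annulus `A_α = {1/(1+α) ≤ |x| ≤ 1/(1-α)}`. -/
def annulus (α : ℝ) : Set R3 :=
  {x : R3 | (1 + α)⁻¹ ≤ ‖x‖ ∧ ‖x‖ ≤ (1 - α)⁻¹}

end

open Set
open scoped Pointwise

lemma measurableSet_annulus (α : ℝ) : MeasurableSet (annulus α) := by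
  unfold annulus
  exact (measurableSet_le measurable_const measurable_norm).inter
    (measurableSet_le measurable_norm measurable_const)

lemma norm_le_two_of_mem_annulus {α : ℝ} (h1 : α ≤ 1 / 2) {y : R3} (hy : y ∈ annulus α) :
    ‖y‖ ≤ 2 := by
  refine hy.2.trans ?_
  rw [inv_le_comm₀ (by linarith) (by norm_num)]
  linarith

/-- The volume of the unit ball of `ℝ³`. -/
noncomputable def unitBallVol : ℝ := (volume (Metric.ball (0 : R3) 1)).toReal

lemma unitBallVol_pos : 0 < unitBallVol :=
  ENNReal.toReal_pos (Metric.measure_ball_pos _ _ one_pos).ne' measure_ball_lt_top.ne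

lemma volume_ball_R3 (x : R3) {r : ℝ} (hr : 0 < r) :
    volume (Metric.ball x r) = ENNReal.ofReal (r ^ 3 * unitBallVol) := by
  rw [Measure.addHaar_ball_of_pos _ _ hr, finrank_euclideanSpace_fin,
    ENNReal.ofReal_mul (by positivity), unitBallVol, ENNReal.ofReal_toReal measure_ball_lt_top.ne]

/-- Dilates of the annulus by the factors `a < b` are disjoint as soon as `a ≤ 2` and
`a + 9 α ≤ b`. -/
lemma disjoint_smul_annulus {α a b : ℝ} (h0 : 0 < α) (h1 : α ≤ 1 / 2) (ha : 0 < a) (ha2 : a ≤ 2)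
    (hab : a + 9 * α ≤ b) : Disjoint (a • annulus α) (b • annulus α) := by
  rw [Set.disjoint_left]
  rintro _ ⟨y, hy, rfl⟩ ⟨z, hz, hzy⟩
  have hn : b * ‖z‖ = a * ‖y‖ := by
    have := congrArg norm hzy
    simpa [norm_smul, abs_of_pos ha, abs_of_pos (show 0 < b by linarith)] using this
  have hlt : a * (1 - α)⁻¹ < b * (1 + α)⁻¹ := by
    rw [← div_eq_mul_inv, ← div_eq_mul_inv, div_lt_div_iff₀ (by linarith) (by linarith)]
    nlinarith
  have e1 := mul_le_mul_of_nonneg_left hy.2 ha.le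
  have e2 := mul_le_mul_of_nonneg_left hz.1 (show 0 ≤ b by linarith)
  linarith

/-- The packing estimate: about `r / α` disjoint dilates of `annulus α ∩ ball x r` fit into
`ball x (2 * r)`. -/
lemma volume_annulus_inter_ball_le {α r : ℝ} (h0 : 0 < α) (h1 : α ≤ 1 / 2) (x : R3)
    (hr : 0 < r) (hr3 : r ≤ 3) :
    volume (annulus α ∩ Metric.ball x r) ≤ ENNReal.ofReal (216 * α * r ^ 2 * unitBallVol) := by
  set S := annulus α ∩ Metric.ball x r with hS
  have hSm : MeasurableSet S := (measurableSet_annulus α).inter measurableSet_ball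
  -- The factors `1 + 9 α k` stay below `1 + r / 3`, so a point of the annulus, of norm at most `2`,
  -- is moved by at most `r`.
  set N : ℕ := ⌊r / (27 * α)⌋₊ + 1 with hN
  have hNr : r / (27 * α) ≤ N := by
    rw [hN]; push_cast; exact (Nat.lt_floor_add_one _).le
  set c : ℕ → ℝ := fun k => 1 + 9 * α * k with hc
  have hc1 : ∀ k, 1 ≤ c k := fun k => by simp only [hc]; nlinarith [Nat.cast_nonneg (α := ℝ) k]
  have hck : ∀ k ∈ Finset.range N, c k ≤ 1 + r / 3 := by
    intro k hk
    have hk' : k ≤ ⌊r / (27 * α)⌋₊ := Nat.lt_succ_iff.1 (Finset.mem_range.1 hk)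
    have h2 : (k : ℝ) ≤ r / (27 * α) :=
      (Nat.cast_le.2 hk').trans (Nat.floor_le (by positivity))
    rw [le_div_iff₀ (by positivity)] at h2
    simp only [hc]
    linarith
  have hlt : ∀ j ∈ Finset.range N, ∀ k, j < k → Disjoint (c j • S) (c k • S) := by
    intro j hj k hjk
    refine (disjoint_smul_annulus h0 h1 (by linarith [hc1 j]) (by linarith [hck j hj])
      ?_).mono (Set.smul_set_mono inter_subset_left) (Set.smul_set_mono inter_subset_left)
    have : (j : ℝ) + 1 ≤ k := by exact_mod_cast hjk
    simp only [hc]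
    nlinarith
  have hd : PairwiseDisjoint (↑(Finset.range N)) fun k => c k • S := by
    intro j hj k hk hjk
    rcases lt_or_gt_of_ne hjk with h | h
    · exact hlt j hj k h
    · exact (hlt k hk j h).symm
  have hsub : (⋃ k ∈ Finset.range N, c k • S) ⊆ Metric.ball x (2 * r) := by
    refine iUnion₂_subset fun k hk => ?_
    rintro _ ⟨y, hy, rfl⟩
    have hy2 := norm_le_two_of_mem_annulus h1 hy.1
    have hyx : dist y x < r := hy.2
    have h3 : dist (c k • y) y ≤ r := by
      rw [dist_eq_norm, show c k • y - y = (c k - 1) • y by rw [sub_smul, one_smul],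
        norm_smul, Real.norm_of_nonneg (by linarith [hc1 k])]
      nlinarith [hck k hk, hc1 k, norm_nonneg y]
    have := dist_triangle (c k • y) y x
    simp only [Metric.mem_ball]
    linarith
  have hvol : ∀ k, volume S ≤ volume (c k • S) := by
    intro k
    rw [Measure.addHaar_smul]
    refine le_mul_of_one_le_left zero_le ?_
    rw [ENNReal.one_le_ofReal]
    exact (one_le_pow₀ (hc1 k)).trans (le_abs_self _)
  have hsum : (N : ENNReal) * volume S ≤ ENNReal.ofReal ((2 * r) ^ 3 * unitBallVol) := by
    rw [← volume_ball_R3 x (by positivity : 0 < 2 * r)]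
    refine le_trans ?_ (measure_mono hsub)
    rw [measure_biUnion_finset hd
      fun k _ => hSm.const_smul_of_ne_zero (by linarith [hc1 k] : c k ≠ 0)]
    calc (N : ENNReal) * volume S = ∑ k ∈ Finset.range N, volume S := by simp
      _ ≤ _ := Finset.sum_le_sum fun k _ => hvol k
  have hfin : volume S ≠ ⊤ :=
    ne_top_of_le_ne_top measure_ball_lt_top.ne (measure_mono inter_subset_right)
  have hV := unitBallVol_pos
  have hreal : (N : ℝ) * (volume S).toReal ≤ (2 * r) ^ 3 * unitBallVol := by
    have := ENNReal.toReal_le_of_le_ofReal (by positivity) hsum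
    simpa [ENNReal.toReal_mul] using this
  rw [ENNReal.le_ofReal_iff_toReal_le hfin (by positivity)]
  have h4 : r / (27 * α) * (volume S).toReal ≤ (2 * r) ^ 3 * unitBallVol :=
    (mul_le_mul_of_nonneg_right hNr ENNReal.toReal_nonneg).trans hreal
  rw [div_mul_eq_mul_div, div_le_iff₀ (by positivity)] at h4
  refine le_of_mul_le_mul_left (h4.trans_eq ?_) hr
  ring

lemma volume_annulus_le {α : ℝ} (h0 : 0 < α) (h1 : α ≤ 1 / 2) :
    volume (annulus α) ≤ ENNReal.ofReal (1944 * α * unitBallVol) := by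
  have h := volume_annulus_inter_ball_le h0 h1 0 (by norm_num : (0 : ℝ) < 3) le_rfl
  rw [inter_eq_left.2 fun y hy => by
    rw [mem_ball_zero_iff]; linarith [norm_le_two_of_mem_annulus h1 hy]] at h
  refine h.trans_eq ?_
  congr 1
  ring

lemma mem_ball_rpow_of_lt_inv_sq {x y : R3} {t : ℝ} (ht : 0 < t) (h : t < (‖x - y‖ ^ 2)⁻¹) :
    y ∈ Metric.ball x (t ^ (-(1 / 2) : ℝ)) := by
  have hpos : 0 < ‖x - y‖ ^ 2 := inv_pos.1 (ht.trans h)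
  rw [Metric.mem_ball, dist_comm, dist_eq_norm]
  refine lt_of_pow_lt_pow_left₀ 2 (by positivity) ?_
  rw [← Real.rpow_natCast (t ^ _), ← Real.rpow_mul ht.le]
  norm_num
  rw [Real.rpow_neg_one]
  exact (lt_inv_comm₀ ht hpos).1 h

/-- **Estimate on the Coulomb-type potential of an annulus** (Lemma 4.3):
there is a universal constant `C` such that for every `0 < α ≤ 1/2` and every
`x ∈ ℝ³`, `∫_{A_α} |x-y|⁻² dy ≤ C α log(α⁻¹)`. -/
theorem annulus_potential_bound :
    ∃ C : ℝ, 0 < C ∧ ∀ α : ℝ, 0 < α → α ≤ 1 / 2 → ∀ x : R3,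
      (∫ y in annulus α, (‖x - y‖ ^ 2)⁻¹) ≤ C * α * Real.log α⁻¹ := by
  have hV := unitBallVol_pos
  refine ⟨5000 * unitBallVol, by positivity, fun α h0 h1 x => ?_⟩
  have hαinv : 2 ≤ α⁻¹ := by
    rw [le_inv_comm₀ (by norm_num) h0]; linarith
  have hlog : 1 / 2 ≤ Real.log α⁻¹ := by
    have := Real.log_le_log (by norm_num) hαinv
    linarith [Real.log_two_gt_d9]
  -- Beyond this level the radius `t ^ (-1/2)` is below `α` and the trivial volume bound is better.
  set T : ℝ := α⁻¹ ^ 2 with hT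
  have hT1 : 1 ≤ T := by rw [hT]; nlinarith
  have hmeas : Measurable fun y : R3 => (‖x - y‖ ^ 2)⁻¹ := by fun_prop
  set m : ℝ → ENNReal := fun t => (volume.restrict (annulus α)) {y : R3 | t < (‖x - y‖ ^ 2)⁻¹}
    with hm
  have hmsub : ∀ t : ℝ, 0 < t →
      m t ≤ volume (annulus α ∩ Metric.ball x (t ^ (-(1 / 2) : ℝ))) := by
    intro t ht
    simp only [hm]
    rw [Measure.restrict_apply (measurableSet_lt measurable_const hmeas)]
    exact measure_mono fun y hy => ⟨hy.2, mem_ball_rpow_of_lt_inv_sq ht hy.1⟩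
  have hI1 : ∫⁻ t in Ioc (0 : ℝ) 1, m t ≤ ENNReal.ofReal (1944 * α * unitBallVol) := by
    calc ∫⁻ t in Ioc (0 : ℝ) 1, m t
        ≤ ∫⁻ t in Ioc (0 : ℝ) 1, ENNReal.ofReal (1944 * α * unitBallVol) :=
          setLIntegral_mono measurable_const fun t ht => (hmsub t ht.1).trans
            ((measure_mono inter_subset_left).trans (volume_annulus_le h0 h1))
      _ = _ := by simp
  have hI2 : ∫⁻ t in Ioc (1 : ℝ) T, m t
      ≤ ENNReal.ofReal (432 * α * unitBallVol * Real.log α⁻¹) := by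
    have hint : IntegrableOn (fun t : ℝ => 216 * α * unitBallVol * t⁻¹) (Ioc 1 T) := by
      refine Integrable.const_mul ?_ _
      have := (intervalIntegrable_inv_iff (a := 1) (b := T)).2
        (Or.inr (notMem_uIcc_of_lt one_pos (by linarith)))
      exact (intervalIntegrable_iff_integrableOn_Ioc_of_le hT1).1 this
    calc ∫⁻ t in Ioc (1 : ℝ) T, m t
        ≤ ∫⁻ t in Ioc (1 : ℝ) T, ENNReal.ofReal (216 * α * unitBallVol * t⁻¹) := by
          refine setLIntegral_mono (by fun_prop) fun t ht => ?_
          have ht0 : 0 < t := by linarith [ht.1]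
          have hr1 : t ^ (-(1 / 2) : ℝ) ≤ 1 :=
            Real.rpow_le_one_of_one_le_of_nonpos ht.1.le (by norm_num)
          refine (hmsub t ht0).trans ((volume_annulus_inter_ball_le h0 h1 x
            (by positivity) (by linarith)).trans_eq ?_)
          rw [← Real.rpow_natCast (t ^ _), ← Real.rpow_mul ht0.le, ← Real.rpow_neg_one]
          norm_num
          congr 1
          ring
      _ = ENNReal.ofReal (∫ t in Ioc (1 : ℝ) T, 216 * α * unitBallVol * t⁻¹) := by
          rw [ofReal_integral_eq_lintegral_ofReal hint]
          filter_upwards [ae_restrict_mem measurableSet_Ioc] with t ht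
          have ht0 : 0 < t := by linarith [ht.1]
          simp only [Pi.zero_apply]
          positivity
      _ = _ := by
          rw [integral_const_mul, ← intervalIntegral.integral_of_le hT1,
            integral_inv_of_pos one_pos (by linarith), div_one, hT, Real.log_pow]
          congr 1
          push_cast
          ring
  have hI3 : ∫⁻ t in Ioi T, m t ≤ ENNReal.ofReal (2 * α * unitBallVol) := by
    have hT0 : 0 < T := by linarith
    have hint : IntegrableOn (fun t : ℝ => unitBallVol * t ^ (-(3 / 2) : ℝ)) (Ioi T) :=
      (integrableOn_Ioi_rpow_of_lt (by norm_num) hT0).const_mul _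
    calc ∫⁻ t in Ioi T, m t
        ≤ ∫⁻ t in Ioi T, ENNReal.ofReal (unitBallVol * t ^ (-(3 / 2) : ℝ)) := by
          refine setLIntegral_mono (by fun_prop) fun t ht => ?_
          have ht0 : 0 < t := hT0.trans ht
          refine (hmsub t ht0).trans ((measure_mono inter_subset_right).trans_eq ?_)
          rw [volume_ball_R3 x (by positivity), ← Real.rpow_natCast (t ^ _),
            ← Real.rpow_mul ht0.le, mul_comm]
          norm_num
      _ = ENNReal.ofReal (∫ t in Ioi T, unitBallVol * t ^ (-(3 / 2) : ℝ)) := by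
          rw [ofReal_integral_eq_lintegral_ofReal hint]
          filter_upwards [ae_restrict_mem measurableSet_Ioi] with t ht
          have ht0 : 0 < t := hT0.trans ht
          simp only [Pi.zero_apply]
          positivity
      _ = _ := by
          have hTα : T ^ (-(1 / 2) : ℝ) = α := by
            rw [hT, ← Real.rpow_natCast, ← Real.rpow_mul (by positivity)]
            norm_num
            rw [Real.rpow_neg_one, inv_inv]
          rw [integral_const_mul, integral_Ioi_rpow_of_lt (by norm_num) hT0,
            show (-(3 / 2) + 1 : ℝ) = -(1 / 2) by norm_num, hTα]
          congr 1
          ring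
  have hLα : α ≤ 2 * (α * Real.log α⁻¹) := by nlinarith
  have hnn : 0 ≤ Real.log α⁻¹ := by linarith
  -- For nonnegative functions the Bochner integral is `toReal` of the Lebesgue integral even
  -- without integrability, so it suffices to bound the latter.
  rw [integral_eq_lintegral_of_nonneg_ae (Filter.Eventually.of_forall fun y => by positivity)
    hmeas.aestronglyMeasurable]
  refine ENNReal.toReal_le_of_le_ofReal (by positivity) ?_
  rw [lintegral_eq_lintegral_meas_lt _ (Filter.Eventually.of_forall fun y => by positivity)
    hmeas.aemeasurable]
  calc ∫⁻ t in Ioi (0 : ℝ), m t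
      ≤ (∫⁻ t in Ioc (0 : ℝ) 1, m t) + ((∫⁻ t in Ioc (1 : ℝ) T, m t) + ∫⁻ t in Ioi T, m t) := by
        rw [← Ioc_union_Ioi_eq_Ioi (zero_le_one' ℝ)]
        refine (lintegral_union_le _ _ _).trans (add_le_add le_rfl ?_)
        rw [← Ioc_union_Ioi_eq_Ioi hT1]
        exact lintegral_union_le _ _ _
    _ ≤ _ := add_le_add hI1 (add_le_add hI2 hI3)
    _ = ENNReal.ofReal (1944 * α * unitBallVol + (432 * α * unitBallVol * Real.log α⁻¹
          + 2 * α * unitBallVol)) := by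
        rw [← ENNReal.ofReal_add (by positivity) (by positivity),
          ← ENNReal.ofReal_add (by positivity) (by positivity)]
    _ ≤ _ := by
        refine ENNReal.ofReal_le_ofReal ?_
        have hL' := mul_le_mul_of_nonneg_left hLα hV.le
        have hp : 0 ≤ unitBallVol * (α * Real.log α⁻¹) := by positivity
        linarith
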